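/- Assume good X and let ρ : varsort → var → Option term be an assignment all of whose defined values are good terms. If the variable x at varsort xs is fresh for ρ (i.e., ρ xs x = None and x at varsort xs is fresh in every term in the range of ρ), then parallel substitution commutes with abstraction: (Abs xs x X)[ρ] = Abs xs x (X[ρ]). -/

import Mathlib

open scoped Classical

universe u

section Binding

variable (var varsort index bindex opsym : Type u)

/-! ### Inputs -/

/-- An `(α,β)`-input: a partial function from `α` to `β`. -/
abbrev Input (α β : Type u) : Type u := α → Option β

/-- The domain of an input. -/
def idom {α β : Type u} (inp : Input α β) : Set α := {a | inp a ≠ none}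

/-- The componentwise lifting of a predicate to inputs. -/
def liftP {α β : Type u} (P : β → Prop) (inp : Input α β) : Prop :=
  ∀ a b, inp a = some b → P b

/-- The componentwise lifting of a function to inputs. -/
def liftF {α β γ : Type u} (f : β → γ) (inp : Input α β) : Input α γ :=
  fun a => (inp a).map f

/-- An input is small if its domain has cardinality smaller than that of `var`. -/
def smallDom {α β : Type u} (inp : Input α β) : Prop :=
  Cardinal.mk (idom inp) < Cardinal.mk var

/-! ### Quasiterms -/

mutual
/-- Quasiterms: raw terms before quotienting by alpha-equivalence. -/
inductive QTerm : Type u where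
  | qVar : varsort → var → QTerm
  | qOp : opsym → (index → Option QTerm) → (bindex → Option QAbs) → QTerm
/-- Quasiabstractions. -/
inductive QAbs : Type u where
  | qAbs : varsort → var → QTerm → QAbs
end

/-- Transposition of two variables. -/
noncomputable def swapVar (z1 z2 x : var) : var :=
  if x = z1 then z2 else if x = z2 then z1 else x

/-- Sort-aware transposition of variables (acts only on variables of varsort `zs`). -/
noncomputable def swapVarS (zs xs : varsort) (z1 z2 x : var) : var :=
  if xs = zs then swapVar var z1 z2 x else x

variable {var varsort index bindex opsym}

/-- Swapping of the variables `z1`, `z2` at varsort `zs` in a quasiterm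
(transposing them everywhere, including binding positions). -/
noncomputable def qSwap (z1 z2 : var) (zs : varsort) :
    QTerm var varsort index bindex opsym → QTerm var varsort index bindex opsym :=
  QTerm.rec (motive_1 := fun _ => QTerm var varsort index bindex opsym)
    (motive_2 := fun _ => QAbs var varsort index bindex opsym)
    (motive_3 := fun _ => Option (QTerm var varsort index bindex opsym))
    (motive_4 := fun _ => Option (QAbs var varsort index bindex opsym))
    (fun xs x => .qVar xs (swapVarS var varsort zs xs z1 z2 x))
    (fun d _ _ rinp rbinp => .qOp d rinp rbinp)
    (fun xs x _ rX => .qAbs xs (swapVarS var varsort zs xs z1 z2 x) rX)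
    none (fun _ r => some r) none (fun _ r => some r)

/-- Swapping of variables in a quasiabstraction. -/
noncomputable def qSwapAbs (z1 z2 : var) (zs : varsort) :
    QAbs var varsort index bindex opsym → QAbs var varsort index bindex opsym
  | .qAbs xs x X => .qAbs xs (swapVarS var varsort zs xs z1 z2 x) (qSwap z1 z2 zs X)

/-! ### Freshness and goodness -/

mutual
/-- `QFresh ys y X`: the variable `y` of varsort `ys` has no free occurrence in `X`. -/
inductive QFresh : varsort → var → QTerm var varsort index bindex opsym → Prop where
  | qVar : ∀ {ys y xs x}, (ys, y) ≠ (xs, x) → QFresh ys y (.qVar xs x)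
  | qOp : ∀ {ys y d inp binp}, (∀ i X, inp i = some X → QFresh ys y X) →
      (∀ j A, binp j = some A → QFreshAbs ys y A) → QFresh ys y (.qOp d inp binp)
/-- Freshness for quasiabstractions. -/
inductive QFreshAbs : varsort → var → QAbs var varsort index bindex opsym → Prop where
  | qAbs_bound : ∀ {xs x X}, QFreshAbs xs x (.qAbs xs x X)
  | qAbs_body : ∀ {ys y xs x X}, QFresh ys y X → QFreshAbs ys y (.qAbs xs x X)
end

mutual
/-- Good quasiterms: all constructors branch less than `|var|`. -/
inductive QGood : QTerm var varsort index bindex opsym → Prop where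
  | qVar : ∀ {xs x}, QGood (.qVar xs x)
  | qOp : ∀ {d inp binp}, (∀ i X, inp i = some X → QGood X) →
      (∀ j A, binp j = some A → QGoodAbs A) →
      smallDom var inp → smallDom var binp → QGood (.qOp d inp binp)
/-- Good quasiabstractions. -/
inductive QGoodAbs : QAbs var varsort index bindex opsym → Prop where
  | qAbs : ∀ {xs x X}, QGood X → QGoodAbs (.qAbs xs x X)
end

/-! ### Alpha-equivalence -/

mutual
/-- Alpha-equivalence of quasiterms. -/
inductive Alpha : QTerm var varsort index bindex opsym →
    QTerm var varsort index bindex opsym → Prop where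
  | qVar : ∀ {xs x}, Alpha (.qVar xs x) (.qVar xs x)
  | qOp : ∀ {d inp binp inp' binp'},
      (∀ i, inp i = none ↔ inp' i = none) →
      (∀ i X X', inp i = some X → inp' i = some X' → Alpha X X') →
      (∀ j, binp j = none ↔ binp' j = none) →
      (∀ j A A', binp j = some A → binp' j = some A' → AlphaAbs A A') →
      Alpha (.qOp d inp binp) (.qOp d inp' binp')
/-- Alpha-equivalence of quasiabstractions (the exists-fresh formulation). -/
inductive AlphaAbs : QAbs var varsort index bindex opsym →
    QAbs var varsort index bindex opsym → Prop where
  | qAbs : ∀ {xs x x' X X' y}, y ∉ ({x, x'} : Set var) →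
      QFresh xs y X → QFresh xs y X' →
      Alpha (qSwap y x xs X) (qSwap y x' xs X') →
      AlphaAbs (.qAbs xs x X) (.qAbs xs x' X')
end

/-! ### Terms and abstractions as quotients -/

variable (var varsort index bindex opsym)

/-- Terms: quasiterms modulo alpha-equivalence. -/
def Term : Type u := Quot (@Alpha var varsort index bindex opsym)

/-- Abstractions: quasiabstractions modulo alpha-equivalence. -/
def Abstr : Type u := Quot (@AlphaAbs var varsort index bindex opsym)

variable {var varsort index bindex opsym}

/-- The projection from quasiterms to terms. -/
def tmk : QTerm var varsort index bindex opsym → Term var varsort index bindex opsym :=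
  Quot.mk _

/-- The projection from quasiabstractions to abstractions. -/
def amk : QAbs var varsort index bindex opsym → Abstr var varsort index bindex opsym :=
  Quot.mk _

/-- A representative of a term. -/
noncomputable def trep (X : Term var varsort index bindex opsym) :
    QTerm var varsort index bindex opsym := Quot.out X

/-- A representative of an abstraction. -/
noncomputable def arep (A : Abstr var varsort index bindex opsym) :
    QAbs var varsort index bindex opsym := Quot.out A

/-- Good terms. -/
def good (X : Term var varsort index bindex opsym) : Prop := QGood (trep X)

/-- Good abstractions. -/
def goodAbs (A : Abstr var varsort index bindex opsym) : Prop := QGoodAbs (arep A)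

/-- The variable-injection constructor on terms. -/
def Var (xs : varsort) (x : var) : Term var varsort index bindex opsym :=
  tmk (.qVar xs x)

/-- The operation constructor on terms. -/
noncomputable def Op (d : opsym) (inp : Input index (Term var varsort index bindex opsym))
    (binp : Input bindex (Abstr var varsort index bindex opsym)) :
    Term var varsort index bindex opsym :=
  tmk (.qOp d (liftF trep inp) (liftF arep binp))

/-- The abstraction constructor. -/
noncomputable def Abs (xs : varsort) (x : var) (X : Term var varsort index bindex opsym) :
    Abstr var varsort index bindex opsym :=
  amk (.qAbs xs x (trep X))

/-- Freshness on terms. -/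
def fresh (ys : varsort) (y : var) (X : Term var varsort index bindex opsym) : Prop :=
  QFresh ys y (trep X)

/-- Freshness on abstractions. -/
def freshAbs (ys : varsort) (y : var) (A : Abstr var varsort index bindex opsym) : Prop :=
  QFreshAbs ys y (arep A)

/-- Swapping on terms. -/
noncomputable def tswap (X : Term var varsort index bindex opsym)
    (z1 z2 : var) (zs : varsort) : Term var varsort index bindex opsym :=
  tmk (qSwap z1 z2 zs (trep X))

/-! ### Substitution -/

mutual
/-- The graph of capture-avoiding substitution on quasiterms:
`QSubst X Y y ys Z` means that `Z` is a result of substituting `Y` for the free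
occurrences of the variable `y` of varsort `ys` in `X` (along a capture-free
representative). -/
inductive QSubst : QTerm var varsort index bindex opsym →
    QTerm var varsort index bindex opsym → var → varsort →
    QTerm var varsort index bindex opsym → Prop where
  | var_eq : ∀ {Y y ys}, QSubst (.qVar ys y) Y y ys Y
  | var_ne : ∀ {Y y ys xs x}, (xs, x) ≠ (ys, y) → QSubst (.qVar xs x) Y y ys (.qVar xs x)
  | op : ∀ {Y y ys d inp binp inp' binp'},
      (∀ i, inp i = none ↔ inp' i = none) →
      (∀ i X X', inp i = some X → inp' i = some X' → QSubst X Y y ys X') →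
      (∀ j, binp j = none ↔ binp' j = none) →
      (∀ j A A', binp j = some A → binp' j = some A' → QSubstAbs A Y y ys A') →
      QSubst (.qOp d inp binp) Y y ys (.qOp d inp' binp')
/-- The graph of capture-avoiding substitution on quasiabstractions. -/
inductive QSubstAbs : QAbs var varsort index bindex opsym →
    QTerm var varsort index bindex opsym → var → varsort →
    QAbs var varsort index bindex opsym → Prop where
  | abs : ∀ {Y y ys xs x X X'}, (xs, x) ≠ (ys, y) → QFresh xs x Y →
      QSubst X Y y ys X' → QSubstAbs (.qAbs xs x X) Y y ys (.qAbs xs x X')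
end

/-- The graph of capture-avoiding substitution on terms. -/
def SubstRel (X Y : Term var varsort index bindex opsym) (y : var) (ys : varsort)
    (Z : Term var varsort index bindex opsym) : Prop :=
  ∃ qX qZ, tmk qX = X ∧ tmk qZ = Z ∧ QSubst qX (trep Y) y ys qZ

/-- Capture-avoiding substitution on terms: `subst X Y y ys` is `X[Y/y]_ys`. -/
noncomputable def subst (X Y : Term var varsort index bindex opsym)
    (y : var) (ys : varsort) : Term var varsort index bindex opsym :=
  if h : ∃ Z, SubstRel X Y y ys Z then h.choose else X

/-- The graph of capture-avoiding substitution on abstractions. -/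
def SubstAbsRel (A : Abstr var varsort index bindex opsym)
    (Y : Term var varsort index bindex opsym) (y : var) (ys : varsort)
    (B : Abstr var varsort index bindex opsym) : Prop :=
  ∃ qA qB, amk qA = A ∧ amk qB = B ∧ QSubstAbs qA (trep Y) y ys qB

/-- Capture-avoiding substitution on abstractions: `substAbs A Y y ys` is `A[Y/y]_ys`. -/
noncomputable def substAbs (A : Abstr var varsort index bindex opsym)
    (Y : Term var varsort index bindex opsym) (y : var) (ys : varsort) :
    Abstr var varsort index bindex opsym :=
  if h : ∃ B, SubstAbsRel A Y y ys B then h.choose else A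

/-! ### Parallel substitution -/

mutual
/-- The graph of capture-avoiding parallel substitution on quasiterms, along an
assignment `ρ : varsort → var → Option qterm`. -/
inductive QPSubst : QTerm var varsort index bindex opsym →
    (varsort → var → Option (QTerm var varsort index bindex opsym)) →
    QTerm var varsort index bindex opsym → Prop where
  | var_some : ∀ {ρ xs x Y}, ρ xs x = some Y → QPSubst (.qVar xs x) ρ Y
  | var_none : ∀ {ρ xs x}, ρ xs x = none → QPSubst (.qVar xs x) ρ (.qVar xs x)
  | op : ∀ {ρ d inp binp inp' binp'},
      (∀ i, inp i = none ↔ inp' i = none) →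
      (∀ i X X', inp i = some X → inp' i = some X' → QPSubst X ρ X') →
      (∀ j, binp j = none ↔ binp' j = none) →
      (∀ j A A', binp j = some A → binp' j = some A' → QPSubstAbs A ρ A') →
      QPSubst (.qOp d inp binp) ρ (.qOp d inp' binp')
/-- The graph of capture-avoiding parallel substitution on quasiabstractions. -/
inductive QPSubstAbs : QAbs var varsort index bindex opsym →
    (varsort → var → Option (QTerm var varsort index bindex opsym)) →
    QAbs var varsort index bindex opsym → Prop where
  | abs : ∀ {ρ xs x X X'}, ρ xs x = none →
      (∀ ys y Y, ρ ys y = some Y → QFresh xs x Y) →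
      QPSubst X ρ X' → QPSubstAbs (.qAbs xs x X) ρ (.qAbs xs x X')
end

/-- Turning a term-valued assignment into a quasiterm-valued one, by picking
representatives. -/
noncomputable def qassign (ρ : varsort → var → Option (Term var varsort index bindex opsym)) :
    varsort → var → Option (QTerm var varsort index bindex opsym) :=
  fun xs x => (ρ xs x).map trep

/-- The graph of parallel substitution on terms. -/
def PSubstRel (X : Term var varsort index bindex opsym)
    (ρ : varsort → var → Option (Term var varsort index bindex opsym))
    (Z : Term var varsort index bindex opsym) : Prop :=
  ∃ qX qZ, tmk qX = X ∧ tmk qZ = Z ∧ QPSubst qX (qassign ρ) qZ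

/-- Capture-avoiding parallel substitution on terms: `psubst X ρ` is `X[ρ]`. -/
noncomputable def psubst (X : Term var varsort index bindex opsym)
    (ρ : varsort → var → Option (Term var varsort index bindex opsym)) :
    Term var varsort index bindex opsym :=
  if h : ∃ Z, PSubstRel X ρ Z then h.choose else X

/-- The graph of parallel substitution on abstractions. -/
def PSubstAbsRel (A : Abstr var varsort index bindex opsym)
    (ρ : varsort → var → Option (Term var varsort index bindex opsym))
    (B : Abstr var varsort index bindex opsym) : Prop :=
  ∃ qA qB, amk qA = A ∧ amk qB = B ∧ QPSubstAbs qA (qassign ρ) qB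

/-- Capture-avoiding parallel substitution on abstractions. -/
noncomputable def psubstAbs (A : Abstr var varsort index bindex opsym)
    (ρ : varsort → var → Option (Term var varsort index bindex opsym)) :
    Abstr var varsort index bindex opsym :=
  if h : ∃ B, PSubstAbsRel A ρ B then h.choose else A


/-! `AlphaAbs` compares bodies after a fresh swap, so its transitivity needs a supply of fresh
variables that quasiterms which are not good may fail to have. Alpha-equivalence relative to a
correspondence between free variables is transitive without any freshness argument, is respected by
capture-avoiding substitution, and coincides with `Alpha` on good quasiterms. Hence substituting
into an abstraction has at most one result, and this must be the abstraction of the result of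
substituting into the body.

As `psubst` and `psubstAbs` return their argument where capture cannot be avoided, it remains to see
that substitution into `X` is possible whenever substitution into `Abs xs x X` is. In a
representative of `Abs xs x X` that can be substituted into, the binder is fresh for the assignment,
as is `x`, so swapping the two preserves the absence of capture, and it turns the body of the
representative into one of `X`. -/

section Inputs

variable {α β γ : Type u}

theorem exists_eq_some_of_none_iff {o : Option α} {o' : Option β} (h : o = none ↔ o' = none)
    {b : β} (hb : o' = some b) : ∃ a, o = some a :=
  Option.ne_none_iff_exists'.1 fun ho => Option.some_ne_none b (hb ▸ h.1 ho)

theorem smallDom_congr {inp : Input α β} {inp' : Input α γ}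
    (h : ∀ a, inp a = none ↔ inp' a = none) : smallDom var inp ↔ smallDom var inp' := by
  have hdom : idom inp = idom inp' := Set.ext fun a => not_congr (h a)
  rw [smallDom, smallDom, hdom]

theorem smallDom.mk_biUnion_lt (hreg : (Cardinal.mk var).IsRegular) {inp : Input α β}
    (hsmall : smallDom var inp) {s : β → Set var}
    (hs : ∀ a b, inp a = some b → Cardinal.mk (s b) < Cardinal.mk var) :
    Cardinal.mk {y | ∃ a b, inp a = some b ∧ y ∈ s b} < Cardinal.mk var := by
  have hUnion : {y | ∃ a b, inp a = some b ∧ y ∈ s b} =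
      ⋃ a : idom inp, {y | ∃ b, inp a = some b ∧ y ∈ s b} := by
    ext y
    simp only [Set.mem_ofPred_eq, Set.mem_iUnion, Subtype.exists, exists_prop]
    refine exists_congr fun a => ⟨?_, And.right⟩
    rintro ⟨b, hab, hy⟩
    exact ⟨Option.ne_none_iff_exists'.2 ⟨b, hab⟩, b, hab, hy⟩
  rw [hUnion, Cardinal.card_iUnion_lt_iff_forall_of_isRegular hreg hsmall]
  rintro ⟨a, ha⟩
  obtain ⟨b, hab⟩ := Option.ne_none_iff_exists'.1 ha
  simpa [hab] using hs a b hab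

theorem exists_input_forall_rel {inp : Input α β} {r : β → γ → Prop}
    (h : ∀ a b, inp a = some b → ∃ c, r b c) :
    ∃ inp' : Input α γ, (∀ a, inp a = none ↔ inp' a = none) ∧
      ∀ a b c, inp a = some b → inp' a = some c → r b c := by
  have hpt : ∀ a, ∃ o : Option γ, (inp a = none ↔ o = none) ∧
      ∀ b c, inp a = some b → o = some c → r b c := by
    intro a
    cases hab : inp a with
    | none => exact ⟨none, by simp⟩
    | some b =>
      obtain ⟨c, hbc⟩ := h a b hab
      exact ⟨some c, by simpa using hbc⟩
  choose inp' hinp' using hpt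
  exact ⟨inp', fun a => (hinp' a).1, fun a => (hinp' a).2⟩

end Inputs

section Renaming

@[elab_as_elim]
theorem QTerm.ind {P : QTerm var varsort index bindex opsym → Prop}
    (qVar : ∀ xs x, P (.qVar xs x))
    (qOp : ∀ d inp binp, (∀ i X, inp i = some X → P X) →
      (∀ j xs x X, binp j = some (.qAbs xs x X) → P X) → P (.qOp d inp binp))
    (X : QTerm var varsort index bindex opsym) : P X :=
  QTerm.rec (motive_1 := P) (motive_2 := fun A => ∀ xs x X, A = .qAbs xs x X → P X)
    (motive_3 := fun o => ∀ X, o = some X → P X)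
    (motive_4 := fun o => ∀ xs x X, o = some (.qAbs xs x X) → P X)
    qVar (fun d inp binp hinp hbinp => qOp d inp binp hinp hbinp)
    (by rintro xs x X hX _ _ _ ⟨⟩; exact hX)
    nofun (by rintro X hX _ ⟨⟩; exact hX)
    nofun (by rintro A hA xs x X ⟨⟩; exact hA xs x X rfl) X

/-- Renaming all variables of a quasiterm, in free, bound and binding positions alike. It extends
`qSwap` to arbitrary sorted families of functions, closed under composition. -/
noncomputable def qRename (f : varsort → var → var) :
    QTerm var varsort index bindex opsym → QTerm var varsort index bindex opsym :=
  QTerm.rec (motive_1 := fun _ => QTerm var varsort index bindex opsym)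
    (motive_2 := fun _ => QAbs var varsort index bindex opsym)
    (motive_3 := fun _ => Option (QTerm var varsort index bindex opsym))
    (motive_4 := fun _ => Option (QAbs var varsort index bindex opsym))
    (fun xs x => .qVar xs (f xs x))
    (fun d _ _ rinp rbinp => .qOp d rinp rbinp)
    (fun xs x _ rX => .qAbs xs (f xs x) rX)
    none (fun _ r => some r) none (fun _ r => some r)

/-- Renaming all variables of a quasiabstraction, including the binding one. -/
noncomputable def qRenameAbs (f : varsort → var → var) :
    QAbs var varsort index bindex opsym → QAbs var varsort index bindex opsym
  | .qAbs xs x X => .qAbs xs (f xs x) (qRename f X)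

theorem qRename_qOp (f : varsort → var → var) (d : opsym)
    (inp : Input index (QTerm var varsort index bindex opsym))
    (binp : Input bindex (QAbs var varsort index bindex opsym)) :
    qRename f (.qOp d inp binp) = .qOp d (liftF (qRename f) inp) (liftF (qRenameAbs f) binp) := by
  change QTerm.qOp d _ _ = _
  congr 1
  · funext i
    unfold liftF
    cases inp i <;> rfl
  · funext j
    unfold liftF
    rcases binp j with _ | ⟨xs, x, X⟩ <;> rfl

theorem qSwap_eq_qRename (z1 z2 : var) (zs : varsort) :
    (qSwap z1 z2 zs : QTerm var varsort index bindex opsym → _) =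
      qRename fun s => swapVarS var varsort zs s z1 z2 :=
  rfl

theorem qRename_id (X : QTerm var varsort index bindex opsym) : qRename (fun _ => id) X = X := by
  induction X using QTerm.ind with
  | qVar xs x => rfl
  | qOp d inp binp ihX ihA =>
    rw [qRename_qOp]
    congr 1
    · funext i
      exact (Option.map_congr (ihX i)).trans Option.map_id'
    · funext j
      refine (Option.map_congr ?_).trans Option.map_id'
      rintro ⟨xs, x, X⟩ hX
      exact congrArg _ (ihA j xs x X hX)

theorem qRename_qRename (f g : varsort → var → var) (X : QTerm var varsort index bindex opsym) :
    qRename g (qRename f X) = qRename (fun s => g s ∘ f s) X := by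
  induction X using QTerm.ind with
  | qVar xs x => rfl
  | qOp d inp binp ihX ihA =>
    simp only [qRename_qOp]
    congr 1
    · funext i
      simp only [liftF, Option.map_map]
      exact Option.map_congr (ihX i)
    · funext j
      simp only [liftF, Option.map_map]
      refine Option.map_congr ?_
      rintro ⟨xs, x, Y⟩ hY
      exact congrArg _ (ihA j xs x Y hY)

@[elab_as_elim]
theorem QTerm.ind_rename {P : QTerm var varsort index bindex opsym → Prop}
    (qVar : ∀ xs x, P (.qVar xs x))
    (qOp : ∀ d inp binp, (∀ i X, inp i = some X → P X) →
      (∀ j xs x X, binp j = some (.qAbs xs x X) → ∀ f, P (qRename f X)) → P (.qOp d inp binp))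
    (X : QTerm var varsort index bindex opsym) : P X := by
  suffices hP : ∀ f, P (qRename f X) from qRename_id X ▸ hP fun _ => id
  intro f
  induction X using QTerm.ind generalizing f with
  | qVar xs x => exact qVar xs (f xs x)
  | qOp d inp binp ihX ihA =>
    rw [qRename_qOp]
    refine qOp _ _ _ (fun i X hX => ?_) (fun j xs x X hX g => ?_)
    · obtain ⟨X, e, rfl⟩ := Option.map_eq_some_iff.1 hX
      exact ihX i X e f
    · obtain ⟨⟨xs, x, X⟩, e, ⟨⟩⟩ := Option.map_eq_some_iff.1 hX
      rw [qRename_qRename]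
      exact ihA j xs x X e _

end Renaming

section Freshness

variable {xs ys : varsort} {x y : var} {X X' : QTerm var varsort index bindex opsym}

theorem qFresh_qVar_iff :
    QFresh ys y (.qVar xs x : QTerm var varsort index bindex opsym) ↔ (ys, y) ≠ (xs, x) :=
  ⟨fun | .qVar h => h, .qVar⟩

theorem qFresh_qOp_iff {d : opsym} {inp : Input index (QTerm var varsort index bindex opsym)}
    {binp : Input bindex (QAbs var varsort index bindex opsym)} :
    QFresh ys y (.qOp d inp binp) ↔ liftP (QFresh ys y) inp ∧ liftP (QFreshAbs ys y) binp :=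
  ⟨fun | .qOp hinp hbinp => ⟨hinp, hbinp⟩, fun h => .qOp h.1 h.2⟩

theorem qFreshAbs_qAbs_iff : QFreshAbs ys y (.qAbs xs x X) ↔ (ys = xs ∧ y = x) ∨ QFresh ys y X :=
  ⟨fun | .qAbs_bound => .inl ⟨rfl, rfl⟩ | .qAbs_body h => .inr h,
    by rintro (⟨rfl, rfl⟩ | h); exacts [.qAbs_bound, .qAbs_body h]⟩

mutual
theorem QGood.rename (f : varsort → var → var) {X : QTerm var varsort index bindex opsym} :
    QGood X → QGood (qRename f X)
  | .qVar => .qVar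
  | .qOp hX hA hinp hbinp => by
    rw [qRename_qOp]
    refine .qOp (fun i X h => ?_) (fun j A h => ?_)
      ((smallDom_congr fun _ => Option.map_eq_none_iff).2 hinp)
      ((smallDom_congr fun _ => Option.map_eq_none_iff).2 hbinp)
    · obtain ⟨X, e, rfl⟩ := Option.map_eq_some_iff.1 h
      exact (hX i X e).rename f
    · obtain ⟨A, e, rfl⟩ := Option.map_eq_some_iff.1 h
      exact (hA j A e).rename f
theorem QGoodAbs.rename (f : varsort → var → var) {A : QAbs var varsort index bindex opsym} :
    QGoodAbs A → QGoodAbs (qRenameAbs f A)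
  | .qAbs hX => .qAbs (hX.rename f)
end

mutual
theorem QGood.mk_not_qFresh_lt (hreg : (Cardinal.mk var).IsRegular) (ys : varsort)
    {X : QTerm var varsort index bindex opsym} :
    QGood X → Cardinal.mk {y | ¬QFresh ys y X} < Cardinal.mk var
  | @QGood.qVar _ _ _ _ _ xs x => by
    have hsub : {y | ¬QFresh ys y (.qVar xs x : QTerm var varsort index bindex opsym)} ⊆ {x} := by
      intro y hy
      exact (Prod.ext_iff.1 (not_not.1 (mt qFresh_qVar_iff.2 hy))).2
    exact (Cardinal.lt_aleph0_iff_set_finite.2 ((Set.finite_singleton x).subset hsub)).trans_le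
      hreg.aleph0_le
  | @QGood.qOp _ _ _ _ _ d inp binp hX hA hinp hbinp => by
    have hunion : {y | ¬QFresh ys y (.qOp d inp binp)} =
        {y | ∃ i X, inp i = some X ∧ y ∈ {y | ¬QFresh ys y X}} ∪
          {y | ∃ j A, binp j = some A ∧ y ∈ {y | ¬QFreshAbs ys y A}} := by
      ext y
      simp only [Set.mem_ofPred_eq, Set.mem_union, qFresh_qOp_iff, liftP, not_and_or, not_forall,
        exists_prop]
    rw [hunion]
    exact (Cardinal.mk_union_le _ _).trans_lt (Cardinal.add_lt_of_lt hreg.aleph0_le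
      (hinp.mk_biUnion_lt hreg fun i X h => (hX i X h).mk_not_qFresh_lt hreg ys)
      (hbinp.mk_biUnion_lt hreg fun j A h => (hA j A h).mk_not_qFreshAbs_lt hreg ys))
theorem QGoodAbs.mk_not_qFreshAbs_lt (hreg : (Cardinal.mk var).IsRegular) (ys : varsort)
    {A : QAbs var varsort index bindex opsym} :
    QGoodAbs A → Cardinal.mk {y | ¬QFreshAbs ys y A} < Cardinal.mk var
  | .qAbs hX => (Cardinal.mk_le_mk_of_subset <| Set.ofPred_subset_ofPred.2 fun _ =>
      mt .qAbs_body).trans_lt (hX.mk_not_qFresh_lt hreg ys)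
end

theorem QGood.exists_qFresh (hreg : (Cardinal.mk var).IsRegular) (hX : QGood X) (hX' : QGood X')
    (ys : varsort) {s : Set var} (hs : Cardinal.mk s < Cardinal.mk var) :
    ∃ y, y ∉ s ∧ QFresh ys y X ∧ QFresh ys y X' := by
  have hlt : Cardinal.mk ↑(s ∪ ({y | ¬QFresh ys y X} ∪ {y | ¬QFresh ys y X'})) <
      Cardinal.mk var :=
    (Cardinal.mk_union_le _ _).trans_lt (Cardinal.add_lt_of_lt hreg.aleph0_le hs
      ((Cardinal.mk_union_le _ _).trans_lt (Cardinal.add_lt_of_lt hreg.aleph0_le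
        (hX.mk_not_qFresh_lt hreg ys) (hX'.mk_not_qFresh_lt hreg ys))))
  have hne : s ∪ ({y | ¬QFresh ys y X} ∪ {y | ¬QFresh ys y X'}) ≠ Set.univ := by
    intro huniv
    rw [huniv, Cardinal.mk_univ] at hlt
    exact hlt.false
  obtain ⟨y, hy⟩ := (Set.ne_univ_iff_exists_notMem _).1 hne
  simp only [Set.mem_union, Set.mem_ofPred_eq, not_or, not_not] at hy
  exact ⟨y, hy⟩

end Freshness

section RelativeAlpha

/-- A correspondence between the variables of two quasiterms, sort by sort. -/
abbrev VarRel (var varsort : Type u) : Type u := varsort → var → var → Prop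

/-- The correspondence in force below a pair of matching binders `x`, `x'` of varsort `xs`: the
binders correspond to each other and shadow all earlier occurrences of `x` and of `x'`. -/
def VarRel.bind (R : VarRel var varsort) (xs : varsort) (x x' : var) : VarRel var varsort :=
  fun s a a' => (s = xs ∧ a = x ∧ a' = x') ∨ (R s a a' ∧ ¬(s = xs ∧ a = x) ∧ ¬(s = xs ∧ a' = x'))

mutual
/-- Alpha-equivalence of quasiterms whose free variables are matched by the correspondence `R`.
Binders are matched by updating `R` instead of by swapping in a fresh variable, so that this
relation is transitive on quasiterms that need not be good, unlike `Alpha`. -/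
inductive RelAlpha : VarRel var varsort → QTerm var varsort index bindex opsym →
    QTerm var varsort index bindex opsym → Prop where
  | qVar {R xs x x'} : R xs x x' → RelAlpha R (.qVar xs x) (.qVar xs x')
  | qOp {R d inp binp inp' binp'} :
      (∀ i, inp i = none ↔ inp' i = none) →
      (∀ i X X', inp i = some X → inp' i = some X' → RelAlpha R X X') →
      (∀ j, binp j = none ↔ binp' j = none) →
      (∀ j A A', binp j = some A → binp' j = some A' → RelAlphaAbs R A A') →
      RelAlpha R (.qOp d inp binp) (.qOp d inp' binp')
/-- Relative alpha-equivalence of quasiabstractions. -/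
inductive RelAlphaAbs : VarRel var varsort → QAbs var varsort index bindex opsym →
    QAbs var varsort index bindex opsym → Prop where
  | qAbs {R xs x x' X X'} : RelAlpha (R.bind xs x x') X X' →
      RelAlphaAbs R (.qAbs xs x X) (.qAbs xs x' X')
end

theorem VarRel.bind_eq_self (xs : varsort) (x : var) :
    VarRel.bind (fun _ => Eq) xs x x = fun _ => Eq := by
  funext s a b
  unfold VarRel.bind
  grind

theorem RelAlpha.abs {xs : varsort} {x : var} {X X' : QTerm var varsort index bindex opsym}
    (h : RelAlpha (fun _ => Eq) X X') :
    RelAlphaAbs (fun _ => Eq) (.qAbs xs x X) (.qAbs xs x X') :=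
  .qAbs ((VarRel.bind_eq_self xs x).symm ▸ h)

mutual
theorem RelAlpha.symm {R S : VarRel var varsort} {X X' : QTerm var varsort index bindex opsym}
    (hRS : ∀ s a b, R s a b → S s b a) : RelAlpha R X X' → RelAlpha S X' X
  | .qVar h => .qVar (hRS _ _ _ h)
  | .qOp hinp hX hbinp hA =>
    .qOp (fun i => (hinp i).symm) (fun i _ _ h h' => (hX i _ _ h' h).symm hRS)
      (fun j => (hbinp j).symm) (fun j _ _ h h' => (hA j _ _ h' h).symm hRS)
theorem RelAlphaAbs.symm {R S : VarRel var varsort} {A A' : QAbs var varsort index bindex opsym}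
    (hRS : ∀ s a b, R s a b → S s b a) : RelAlphaAbs R A A' → RelAlphaAbs S A' A
  | .qAbs h => .qAbs <| h.symm fun
    | _, _, _, .inl ⟨hs, ha, hb⟩ => .inl ⟨hs, hb, ha⟩
    | _, _, _, .inr ⟨hR, ha, hb⟩ => .inr ⟨hRS _ _ _ hR, hb, ha⟩
end

theorem VarRel.bind_trans {R S T : VarRel var varsort}
    (hRST : ∀ s a b c, R s a b → S s b c → T s a c) {xs : varsort} {x y z : var} (s : varsort)
    (a b c : var) : R.bind xs x y s a b → S.bind xs y z s b c → T.bind xs x z s a c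
  | .inl ⟨hs, ha, _⟩, .inl ⟨_, _, hc⟩ => .inl ⟨hs, ha, hc⟩
  | .inl ⟨hs, _, hb⟩, .inr ⟨_, hb', _⟩ => absurd ⟨hs, hb⟩ hb'
  | .inr ⟨_, _, hb⟩, .inl ⟨hs, hb', _⟩ => absurd ⟨hs, hb'⟩ hb
  | .inr ⟨hR, ha, _⟩, .inr ⟨hS, _, hc⟩ => .inr ⟨hRST s a b c hR hS, ha, hc⟩

mutual
theorem RelAlpha.trans {R S T : VarRel var varsort}
    {X Y Z : QTerm var varsort index bindex opsym}
    (hRST : ∀ s a b c, R s a b → S s b c → T s a c) :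
    RelAlpha R X Y → RelAlpha S Y Z → RelAlpha T X Z
  | .qVar h, .qVar h' => .qVar (hRST _ _ _ _ h h')
  | .qOp hinp hX hbinp hA, .qOp hinp' hX' hbinp' hA' => by
    refine .qOp (fun i => (hinp i).trans (hinp' i)) (fun i X Z h h' => ?_)
      (fun j => (hbinp j).trans (hbinp' j)) (fun j A C h h' => ?_)
    · obtain ⟨Y, hY⟩ := exists_eq_some_of_none_iff (hinp' i) h'
      exact (hX i X Y h hY).trans hRST (hX' i Y Z hY h')
    · obtain ⟨B, hB⟩ := exists_eq_some_of_none_iff (hbinp' j) h'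
      exact (hA j A B h hB).trans hRST (hA' j B C hB h')
theorem RelAlphaAbs.trans {R S T : VarRel var varsort}
    {A B C : QAbs var varsort index bindex opsym}
    (hRST : ∀ s a b c, R s a b → S s b c → T s a c) :
    RelAlphaAbs R A B → RelAlphaAbs S B C → RelAlphaAbs T A C
  | .qAbs h, .qAbs h' => .qAbs (h.trans (VarRel.bind_trans hRST) h')
end

theorem RelAlpha.refl (X : QTerm var varsort index bindex opsym) :
    RelAlpha (fun _ => Eq) X X := by
  induction X using QTerm.ind with
  | qVar xs x => exact .qVar rfl
  | qOp d inp binp ihX ihA =>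
    refine .qOp (fun _ => .rfl) (fun i X X' h h' => ?_) (fun _ => .rfl) (fun j A A' h h' => ?_)
    · obtain rfl := Option.some_inj.1 (h.symm.trans h')
      exact ihX i X h
    · obtain rfl := Option.some_inj.1 (h.symm.trans h')
      obtain ⟨xs, x, X⟩ := A
      exact (ihA j xs x X h).abs

theorem RelAlphaAbs.refl : ∀ A : QAbs var varsort index bindex opsym,
    RelAlphaAbs (fun _ => Eq) A A
  | .qAbs _ _ X => (RelAlpha.refl X).abs

mutual
theorem RelAlpha.qGood {R : VarRel var varsort} {X X' : QTerm var varsort index bindex opsym} :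
    RelAlpha R X X' → QGood X → QGood X'
  | .qVar _, _ => .qVar
  | .qOp hinp hX hbinp hA, .qOp gX gA ginp gbinp => by
    refine .qOp (fun i X' h' => ?_) (fun j A' h' => ?_)
      ((smallDom_congr hinp).1 ginp) ((smallDom_congr hbinp).1 gbinp)
    · obtain ⟨X, h⟩ := exists_eq_some_of_none_iff (hinp i) h'
      exact (hX i X X' h h').qGood (gX i X h)
    · obtain ⟨A, h⟩ := exists_eq_some_of_none_iff (hbinp j) h'
      exact (hA j A A' h h').qGoodAbs (gA j A h)
theorem RelAlphaAbs.qGoodAbs {R : VarRel var varsort}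
    {A A' : QAbs var varsort index bindex opsym} : RelAlphaAbs R A A' → QGoodAbs A → QGoodAbs A'
  | .qAbs h, .qAbs gX => .qAbs (h.qGood gX)
end

mutual
theorem RelAlpha.rename {f g : varsort → var → var} (hf : ∀ s, (f s).Injective)
    (hg : ∀ s, (g s).Injective) {R S : VarRel var varsort}
    {X X' : QTerm var varsort index bindex opsym}
    (hRS : ∀ s a b, ¬QFresh s a X → ¬QFresh s b X' → R s a b → S s (f s a) (g s b)) :
    RelAlpha R X X' → RelAlpha S (qRename f X) (qRename g X')
  | .qVar h => .qVar (hRS _ _ _ (mt qFresh_qVar_iff.1 (not_not.2 rfl))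
      (mt qFresh_qVar_iff.1 (not_not.2 rfl)) h)
  | .qOp hinp hX hbinp hA => by
    rw [qRename_qOp, qRename_qOp]
    refine .qOp (fun i => by simp only [liftF, Option.map_eq_none_iff, hinp i])
      (fun i _ _ h h' => ?_) (fun j => by simp only [liftF, Option.map_eq_none_iff, hbinp j])
      (fun j _ _ h h' => ?_)
    · obtain ⟨X, e, rfl⟩ := Option.map_eq_some_iff.1 h
      obtain ⟨X', e', rfl⟩ := Option.map_eq_some_iff.1 h'
      exact (hX i X X' e e').rename hf hg fun s a b ha hb =>
        hRS s a b (fun H => ha ((qFresh_qOp_iff.1 H).1 i X e))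
          (fun H => hb ((qFresh_qOp_iff.1 H).1 i X' e'))
    · obtain ⟨A, e, rfl⟩ := Option.map_eq_some_iff.1 h
      obtain ⟨A', e', rfl⟩ := Option.map_eq_some_iff.1 h'
      exact (hA j A A' e e').rename hf hg fun s a b ha hb =>
        hRS s a b (fun H => ha ((qFresh_qOp_iff.1 H).2 j A e))
          (fun H => hb ((qFresh_qOp_iff.1 H).2 j A' e'))
theorem RelAlphaAbs.rename {f g : varsort → var → var} (hf : ∀ s, (f s).Injective)
    (hg : ∀ s, (g s).Injective) {R S : VarRel var varsort}
    {A A' : QAbs var varsort index bindex opsym}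
    (hRS : ∀ s a b, ¬QFreshAbs s a A → ¬QFreshAbs s b A' → R s a b → S s (f s a) (g s b)) :
    RelAlphaAbs R A A' → RelAlphaAbs S (qRenameAbs f A) (qRenameAbs g A')
  | .qAbs h => by
    refine .qAbs (h.rename hf hg ?_)
    rintro s a b ha hb (⟨rfl, rfl, rfl⟩ | ⟨hR, hax, hbx⟩)
    · exact .inl ⟨rfl, rfl, rfl⟩
    · refine .inr ⟨hRS s a b ?_ ?_ hR, ?_, ?_⟩
      · exact mt qFreshAbs_qAbs_iff.1 (not_or.2 ⟨hax, ha⟩)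
      · exact mt qFreshAbs_qAbs_iff.1 (not_or.2 ⟨hbx, hb⟩)
      · rintro ⟨rfl, hfa⟩
        exact hax ⟨rfl, hf s hfa⟩
      · rintro ⟨rfl, hgb⟩
        exact hbx ⟨rfl, hg s hgb⟩
end

theorem RelAlpha.mono {R S : VarRel var varsort} {X X' : QTerm var varsort index bindex opsym}
    (h : RelAlpha R X X') (hRS : ∀ s a b, ¬QFresh s a X → ¬QFresh s b X' → R s a b → S s a b) :
    RelAlpha S X X' := by
  simpa only [qRename_id] using
    h.rename (fun _ => Function.injective_id) (fun _ => Function.injective_id) hRS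

end RelativeAlpha

section AlphaComparison

variable {xs : varsort} {x x' y : var} {X X' : QTerm var varsort index bindex opsym}

theorem swapVarS_involutive (zs s : varsort) (z1 z2 : var) :
    (swapVarS var varsort zs s z1 z2).Involutive := by
  intro a
  unfold swapVarS swapVar
  grind

theorem swapVarS_eq_iff_bind {s : varsort} {a b : var}
    (ha : s = xs → a ≠ y) (hb : s = xs → b ≠ y) :
    swapVarS var varsort xs s y x a = swapVarS var varsort xs s y x' b ↔
      VarRel.bind (fun _ => Eq) xs x x' s a b := by
  unfold VarRel.bind swapVarS swapVar
  grind

theorem relAlpha_qRename_iff {f g : varsort → var → var} (hf : ∀ s, (f s).Involutive)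
    (hg : ∀ s, (g s).Involutive) {R : VarRel var varsort} :
    RelAlpha R (qRename f X) (qRename g X') ↔
      RelAlpha (fun s a b => R s (f s a) (g s b)) X X' := by
  constructor <;> intro h
  · have hback := h.rename (fun s => (hf s).injective) (fun s => (hg s).injective)
      (S := fun s a b => R s (f s a) (g s b))
      fun s a b _ _ hR => by simpa only [(hf s) a, (hg s) b] using hR
    simpa only [qRename_qRename, (hf _).comp_self, (hg _).comp_self, qRename_id] using hback
  · exact h.rename (fun s => (hf s).injective) (fun s => (hg s).injective)
      fun _ _ _ _ _ hR => hR

theorem relAlpha_qSwap_iff (hX : QFresh xs y X) (hX' : QFresh xs y X') :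
    RelAlpha (fun _ => Eq) (qSwap y x xs X) (qSwap y x' xs X') ↔
      RelAlpha (VarRel.bind (fun _ => Eq) xs x x') X X' := by
  have hbind : ∀ s a b, ¬QFresh s a X → ¬QFresh s b X' →
      (swapVarS var varsort xs s y x a = swapVarS var varsort xs s y x' b ↔
        VarRel.bind (fun _ => Eq) xs x x' s a b) := fun s a b ha hb =>
    swapVarS_eq_iff_bind (by rintro rfl rfl; exact ha hX) (by rintro rfl rfl; exact hb hX')
  rw [qSwap_eq_qRename, qSwap_eq_qRename, relAlpha_qRename_iff
    (fun s => swapVarS_involutive xs s y x) fun s => swapVarS_involutive xs s y x']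
  exact ⟨fun h => h.mono fun s a b ha hb => (hbind s a b ha hb).1,
    fun h => h.mono fun s a b ha hb => (hbind s a b ha hb).2⟩

theorem eq_swapVarS_of_bind {s : varsort} {a b : var}
    (h : VarRel.bind (fun _ => Eq) xs x x' s a b) : a = swapVarS var varsort xs s x x' b := by
  unfold VarRel.bind at h
  unfold swapVarS swapVar
  grind

theorem RelAlpha.qSwap_of_bind (h : RelAlpha (VarRel.bind (fun _ => Eq) xs x x') X X') :
    RelAlpha (fun _ => Eq) X (qSwap x x' xs X') := by
  have hswap := h.rename (fun _ => Function.injective_id)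
    (fun s => (swapVarS_involutive xs s x x').injective) (S := fun _ => Eq)
    fun s a b _ _ hab => eq_swapVarS_of_bind hab
  rwa [qRename_id] at hswap

mutual
theorem Alpha.relAlpha {X X' : QTerm var varsort index bindex opsym} :
    Alpha X X' → RelAlpha (fun _ => Eq) X X'
  | .qVar => .qVar rfl
  | .qOp hinp hX hbinp hA => .qOp hinp (fun i X X' h h' => (hX i X X' h h').relAlpha)
      hbinp (fun j A A' h h' => (hA j A A' h h').relAlphaAbs)
theorem AlphaAbs.relAlphaAbs {A A' : QAbs var varsort index bindex opsym} :
    AlphaAbs A A' → RelAlphaAbs (fun _ => Eq) A A'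
  | .qAbs _ hX hX' h => .qAbs ((relAlpha_qSwap_iff hX hX').1 h.relAlpha)
end

theorem RelAlpha.exists_relAlpha_qSwap (hreg : (Cardinal.mk var).IsRegular) (hX : QGood X)
    (h : RelAlpha (VarRel.bind (fun _ => Eq) xs x x') X X') :
    ∃ y, y ∉ ({x, x'} : Set var) ∧ QFresh xs y X ∧ QFresh xs y X' ∧
      RelAlpha (fun _ => Eq) (qSwap y x xs X) (qSwap y x' xs X') := by
  obtain ⟨y, hy, hyX, hyX'⟩ := hX.exists_qFresh hreg (h.qGood hX) xs
    ((Cardinal.lt_aleph0_iff_set_finite.2 (Set.toFinite {x, x'})).trans_le hreg.aleph0_le)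
  exact ⟨y, hy, hyX, hyX', (relAlpha_qSwap_iff hyX hyX').2 h⟩

theorem RelAlpha.alpha (hreg : (Cardinal.mk var).IsRegular)
    (h : RelAlpha (fun _ => Eq) X X') (hX : QGood X) : Alpha X X' := by
  induction X using QTerm.ind_rename generalizing X' with
  | qVar xs x =>
    obtain @⟨_, _, _, _, rfl⟩ := h
    exact .qVar
  | qOp d inp binp ihX ihA =>
    obtain _ | ⟨hinp, hXX', hbinp, hAA'⟩ := h
    obtain _ | ⟨gX, gA, _, _⟩ := hX
    refine .qOp hinp (fun i X X' e e' => ihX i X e (hXX' i X X' e e') (gX i X e)) hbinp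
      fun j A A' e e' => ?_
    obtain ⟨xs, x, Y⟩ := A
    obtain ⟨hY⟩ := hAA' j _ A' e e'
    obtain ⟨gY⟩ := gA j _ e
    obtain ⟨y, hy, hyY, hyY', hswap⟩ := hY.exists_relAlpha_qSwap hreg gY
    exact .qAbs hy hyY hyY' (ihA j xs x Y e _ hswap (gY.rename _))

theorem RelAlphaAbs.alphaAbs (hreg : (Cardinal.mk var).IsRegular)
    {A A' : QAbs var varsort index bindex opsym} :
    RelAlphaAbs (fun _ => Eq) A A' → QGoodAbs A → AlphaAbs A A'
  | .qAbs h, .qAbs hX => by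
    obtain ⟨y, hy, hyX, hyX', hswap⟩ := h.exists_relAlpha_qSwap hreg hX
    exact .qAbs hy hyX hyX' (hswap.alpha hreg (hX.rename _))

end AlphaComparison

section Quotient

variable {xs : varsort} {x : var} {X X' : QTerm var varsort index bindex opsym}
  {A A' : QAbs var varsort index bindex opsym}

theorem relAlpha_eq_equivalence :
    Equivalence (RelAlpha (index := index) (bindex := bindex) (opsym := opsym)
      (fun (_ : varsort) => @Eq var)) where
  refl := .refl
  symm := .symm fun _ _ _ => Eq.symm
  trans := .trans fun _ _ _ _ => Eq.trans

theorem relAlphaAbs_eq_equivalence :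
    Equivalence (RelAlphaAbs (index := index) (bindex := bindex) (opsym := opsym)
      (fun (_ : varsort) => @Eq var)) where
  refl := .refl
  symm := .symm fun _ _ _ => Eq.symm
  trans := .trans fun _ _ _ _ => Eq.trans

theorem relAlpha_of_tmk_eq (h : tmk X = tmk X') : RelAlpha (fun _ => Eq) X X' :=
  relAlpha_eq_equivalence.eqvGen_iff.1 ((Quot.eqvGen_exact h).mono fun _ _ => Alpha.relAlpha)

theorem relAlphaAbs_of_amk_eq (h : amk A = amk A') : RelAlphaAbs (fun _ => Eq) A A' :=
  relAlphaAbs_eq_equivalence.eqvGen_iff.1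
    ((Quot.eqvGen_exact h).mono fun _ _ => AlphaAbs.relAlphaAbs)

theorem relAlpha_trep_tmk (X : QTerm var varsort index bindex opsym) :
    RelAlpha (fun _ => Eq) (trep (tmk X)) X :=
  relAlpha_of_tmk_eq (Quot.out_eq _)

theorem relAlphaAbs_arep_amk (A : QAbs var varsort index bindex opsym) :
    RelAlphaAbs (fun _ => Eq) (arep (amk A)) A :=
  relAlphaAbs_of_amk_eq (Quot.out_eq _)

theorem good_tmk_iff : good (tmk X) ↔ QGood X :=
  ⟨(relAlpha_trep_tmk X).qGood, (relAlpha_eq_equivalence.symm (relAlpha_trep_tmk X)).qGood⟩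

theorem goodAbs_amk_iff : goodAbs (amk A) ↔ QGoodAbs A :=
  ⟨(relAlphaAbs_arep_amk A).qGoodAbs,
    (relAlphaAbs_eq_equivalence.symm (relAlphaAbs_arep_amk A)).qGoodAbs⟩

theorem RelAlpha.tmk_eq (hreg : (Cardinal.mk var).IsRegular)
    (h : RelAlpha (fun _ => Eq) X X') (hX : QGood X) : tmk X = tmk X' :=
  Quot.sound (h.alpha hreg hX)

theorem RelAlphaAbs.amk_eq (hreg : (Cardinal.mk var).IsRegular)
    (h : RelAlphaAbs (fun _ => Eq) A A') (hA : QGoodAbs A) : amk A = amk A' :=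
  Quot.sound (h.alphaAbs hreg hA)

theorem amk_qAbs (hreg : (Cardinal.mk var).IsRegular) (hX : QGood X) :
    amk (.qAbs xs x X) = Abs xs x (tmk X) :=
  (relAlpha_eq_equivalence.symm (relAlpha_trep_tmk X)).abs.amk_eq hreg (.qAbs hX)

end Quotient

section ParallelSubstitution

variable {xs : varsort} {x x' : var} {R : VarRel var varsort}
  {ρ ρ' σ : varsort → var → Option (QTerm var varsort index bindex opsym)}

/-- Freshness of a variable for an assignment: the assignment neither replaces the variable nor
introduces it. This is the side condition for substituting under a binder. -/
def QFreshAssign (xs : varsort) (x : var)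
    (ρ : varsort → var → Option (QTerm var varsort index bindex opsym)) : Prop :=
  ρ xs x = none ∧ ∀ ys y Y, ρ ys y = some Y → QFresh xs x Y

/-- Two assignments treat variables matched by `R` alike, up to alpha-equivalence relative to `R`
of the substituted quasiterms. -/
def RelAssign (R : VarRel var varsort)
    (ρ ρ' : varsort → var → Option (QTerm var varsort index bindex opsym)) : Prop :=
  ∀ s a a', R s a a' → Option.Rel (RelAlpha R) (ρ s a) (ρ' s a')

theorem RelAssign.refl (ρ : varsort → var → Option (QTerm var varsort index bindex opsym)) :
    RelAssign (fun _ => Eq) ρ ρ := by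
  rintro s a _ rfl
  cases ρ s a
  exacts [.none, .some (.refl _)]

theorem RelAssign.bind (h : RelAssign R ρ ρ') (hx : QFreshAssign xs x ρ)
    (hx' : QFreshAssign xs x' ρ') : RelAssign (R.bind xs x x') ρ ρ' := by
  rintro s a a' (⟨rfl, rfl, rfl⟩ | ⟨hR, -, -⟩)
  · rw [hx.1, hx'.1]
    exact .none
  · have hrel := h s a a' hR
    cases hY : ρ s a <;> cases hY' : ρ' s a' <;> rw [hY, hY'] at hrel <;> cases hrel
    case none.none => exact .none
    case some.some Y Y' hYY' =>
      refine .some (hYY'.mono fun t b b' hb hb' hRb => .inr ⟨hRb, ?_, ?_⟩)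
      · rintro ⟨rfl, rfl⟩
        exact hb (hx.2 s a Y hY)
      · rintro ⟨rfl, rfl⟩
        exact hb' (hx'.2 s a' Y' hY')

mutual
theorem QPSubst.qGood (hρ : ∀ ys y Y, ρ ys y = some Y → QGood Y)
    {X Z : QTerm var varsort index bindex opsym} : QPSubst X ρ Z → QGood X → QGood Z
  | .var_some h, _ => hρ _ _ _ h
  | .var_none _, _ => .qVar
  | .op hinp hX hbinp hA, .qOp gX gA ginp gbinp => by
    refine .qOp (fun i Z e' => ?_) (fun j B e' => ?_)
      ((smallDom_congr hinp).1 ginp) ((smallDom_congr hbinp).1 gbinp)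
    · obtain ⟨X, e⟩ := exists_eq_some_of_none_iff (hinp i) e'
      exact (hX i X Z e e').qGood hρ (gX i X e)
    · obtain ⟨A, e⟩ := exists_eq_some_of_none_iff (hbinp j) e'
      exact (hA j A B e e').qGoodAbs hρ (gA j A e)
theorem QPSubstAbs.qGoodAbs (hρ : ∀ ys y Y, ρ ys y = some Y → QGood Y)
    {A B : QAbs var varsort index bindex opsym} : QPSubstAbs A ρ B → QGoodAbs A → QGoodAbs B
  | .abs _ _ h, .qAbs hX => .qAbs (h.qGood hρ hX)
end

mutual
theorem QPSubst.relAlpha {R : VarRel var varsort} (hρ : RelAssign R ρ ρ')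
    {X X' Z Z' : QTerm var varsort index bindex opsym} :
    RelAlpha R X X' → QPSubst X ρ Z → QPSubst X' ρ' Z' → RelAlpha R Z Z'
  | .qVar h, .var_some hY, .var_some hY' => by simpa [hY, hY'] using hρ _ _ _ h
  | .qVar h, .var_some hY, .var_none hY' => by simpa [hY, hY'] using hρ _ _ _ h
  | .qVar h, .var_none hY, .var_some hY' => by simpa [hY, hY'] using hρ _ _ _ h
  | .qVar h, .var_none _, .var_none _ => .qVar h
  | .qOp hinp hX hbinp hA, .op kinp kX kbinp kA, .op kinp' kX' kbinp' kA' => by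
    refine .qOp (fun i => (kinp i).symm.trans ((hinp i).trans (kinp' i))) (fun i Z Z' e e' => ?_)
      (fun j => (kbinp j).symm.trans ((hbinp j).trans (kbinp' j))) (fun j B B' e e' => ?_)
    · obtain ⟨X, eX⟩ := exists_eq_some_of_none_iff (kinp i) e
      obtain ⟨X', eX'⟩ := exists_eq_some_of_none_iff (kinp' i) e'
      exact (kX i X Z eX e).relAlpha hρ (hX i X X' eX eX') (kX' i X' Z' eX' e')
    · obtain ⟨A, eA⟩ := exists_eq_some_of_none_iff (kbinp j) e
      obtain ⟨A', eA'⟩ := exists_eq_some_of_none_iff (kbinp' j) e'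
      exact (kA j A B eA e).relAlphaAbs hρ (hA j A A' eA eA') (kA' j A' B' eA' e')
theorem QPSubstAbs.relAlphaAbs {R : VarRel var varsort} (hρ : RelAssign R ρ ρ')
    {A A' B B' : QAbs var varsort index bindex opsym} :
    RelAlphaAbs R A A' → QPSubstAbs A ρ B → QPSubstAbs A' ρ' B' → RelAlphaAbs R B B'
  | .qAbs h, .abs hnone hfresh hZ, .abs hnone' hfresh' hZ' =>
    .qAbs (hZ.relAlpha (hρ.bind ⟨hnone, hfresh⟩ ⟨hnone', hfresh'⟩) h hZ')
end

theorem exists_qPSubst_qVar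
    (ρ : varsort → var → Option (QTerm var varsort index bindex opsym)) (xs : varsort) (x : var) :
    ∃ Z, QPSubst (.qVar xs x) ρ Z := by
  cases h : ρ xs x with
  | none => exact ⟨_, .var_none h⟩
  | some Y => exact ⟨Y, .var_some h⟩

mutual
theorem QPSubst.exists_rename {f : varsort → var → var}
    (hf : ∀ s z, QFreshAssign s z ρ → QFreshAssign s (f s z) σ)
    {X Z : QTerm var varsort index bindex opsym} :
    QPSubst X ρ Z → ∃ Z', QPSubst (qRename f X) σ Z'
  | @QPSubst.var_some _ _ _ _ _ _ xs x _ _ => exists_qPSubst_qVar σ xs (f xs x)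
  | @QPSubst.var_none _ _ _ _ _ _ xs x _ => exists_qPSubst_qVar σ xs (f xs x)
  | .op (inp := inp) (binp := binp) hinp hX hbinp hA => by
    have hinp' : ∀ i Y, liftF (qRename f) inp i = some Y → ∃ Z, QPSubst Y σ Z := by
      rintro i _ e
      obtain ⟨X, eX, rfl⟩ := Option.map_eq_some_iff.1 e
      obtain ⟨Z, eZ⟩ := exists_eq_some_of_none_iff (hinp i).symm eX
      exact (hX i X Z eX eZ).exists_rename hf
    have hbinp' : ∀ j A, liftF (qRenameAbs f) binp j = some A → ∃ B, QPSubstAbs A σ B := by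
      rintro j _ e
      obtain ⟨A, eA, rfl⟩ := Option.map_eq_some_iff.1 e
      obtain ⟨B, eB⟩ := exists_eq_some_of_none_iff (hbinp j).symm eA
      exact (hA j A B eA eB).exists_rename hf
    obtain ⟨_, hinpσ, hXσ⟩ := exists_input_forall_rel hinp'
    obtain ⟨_, hbinpσ, hAσ⟩ := exists_input_forall_rel hbinp'
    rw [qRename_qOp]
    exact ⟨_, .op hinpσ hXσ hbinpσ hAσ⟩
theorem QPSubstAbs.exists_rename {f : varsort → var → var}
    (hf : ∀ s z, QFreshAssign s z ρ → QFreshAssign s (f s z) σ)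
    {A B : QAbs var varsort index bindex opsym} :
    QPSubstAbs A ρ B → ∃ B', QPSubstAbs (qRenameAbs f A) σ B'
  | .abs hnone hfresh h => by
    obtain ⟨Z', hZ'⟩ := h.exists_rename hf
    obtain ⟨hnone', hfresh'⟩ := hf _ _ ⟨hnone, hfresh⟩
    exact ⟨_, .abs hnone' hfresh' hZ'⟩
end

end ParallelSubstitution

section TermSubstitution

variable {X Z : Term var varsort index bindex opsym} {A B B' : Abstr var varsort index bindex opsym}
  {ρ : varsort → var → Option (Term var varsort index bindex opsym)} {xs : varsort} {x : var}

theorem qGood_of_qassign_eq_some (hρ : ∀ ys y Y, ρ ys y = some Y → good Y) (ys : varsort) (y : var)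
    (Y : QTerm var varsort index bindex opsym) (hY : qassign ρ ys y = some Y) : QGood Y := by
  obtain ⟨Y, e, rfl⟩ := Option.map_eq_some_iff.1 hY
  exact hρ ys y Y e

theorem qFreshAssign_qassign (hnone : ρ xs x = none)
    (hfresh : ∀ ys y Y, ρ ys y = some Y → fresh xs x Y) : QFreshAssign xs x (qassign ρ) := by
  refine ⟨Option.map_eq_none_iff.2 hnone, fun ys y Y hY => ?_⟩
  obtain ⟨Y, e, rfl⟩ := Option.map_eq_some_iff.1 hY
  exact hfresh ys y Y e

theorem goodAbs_abs (hX : good X) : goodAbs (Abs xs x X) :=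
  goodAbs_amk_iff.2 (.qAbs hX)

theorem PSubstRel.abs (hreg : (Cardinal.mk var).IsRegular)
    (hρ : ∀ ys y Y, ρ ys y = some Y → good Y) (hx : QFreshAssign xs x (qassign ρ)) (hX : good X)
    (h : PSubstRel X ρ Z) : PSubstAbsRel (Abs xs x X) ρ (Abs xs x Z) := by
  obtain ⟨qX, qZ, rfl, rfl, h⟩ := h
  have gX : QGood qX := good_tmk_iff.1 hX
  have gZ : QGood qZ := h.qGood (qGood_of_qassign_eq_some hρ) gX
  exact ⟨.qAbs xs x qX, .qAbs xs x qZ, amk_qAbs hreg gX, amk_qAbs hreg gZ, .abs hx.1 hx.2 h⟩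

theorem PSubstAbsRel.unique (hreg : (Cardinal.mk var).IsRegular)
    (hρ : ∀ ys y Y, ρ ys y = some Y → good Y) (hA : goodAbs A) (h : PSubstAbsRel A ρ B)
    (h' : PSubstAbsRel A ρ B') : B = B' := by
  obtain ⟨qA, qB, rfl, rfl, hB⟩ := h
  obtain ⟨qA', qB', hAA', rfl, hB'⟩ := h'
  have hBB' : RelAlphaAbs (fun _ => Eq) qB qB' :=
    hB.relAlphaAbs (.refl _) (relAlphaAbs_of_amk_eq hAA'.symm) hB'
  exact hBB'.amk_eq hreg
    (hB.qGoodAbs (qGood_of_qassign_eq_some hρ) (goodAbs_amk_iff.1 hA))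

theorem QFreshAssign.swapVarS {ρ : varsort → var → Option (QTerm var varsort index bindex opsym)}
    {x y : var} (hx : QFreshAssign xs x ρ) (hy : QFreshAssign xs y ρ) (s : varsort) (z : var)
    (hz : QFreshAssign s z ρ) : QFreshAssign s (swapVarS var varsort xs s x y z) ρ := by
  unfold _root_.swapVarS swapVar
  split_ifs with hs
  exacts [hs ▸ hy, hs ▸ hx, hz, hz]

theorem PSubstAbsRel.exists_psubstRel (hreg : (Cardinal.mk var).IsRegular)
    (hx : QFreshAssign xs x (qassign ρ)) (hX : good X) (h : PSubstAbsRel (Abs xs x X) ρ B) :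
    ∃ Z, PSubstRel X ρ Z := by
  obtain ⟨⟨_, y, Y⟩, _, hA, -, hB⟩ := h
  obtain ⟨hXY⟩ := relAlphaAbs_of_amk_eq hA.symm
  obtain @⟨_, _, _, _, W, hy, hy', hW⟩ := hB
  obtain ⟨Z, hZ⟩ := hW.exists_rename (hx.swapVarS ⟨hy, hy'⟩)
  exact ⟨tmk Z, _, Z, (hXY.qSwap_of_bind.tmk_eq hreg hX).symm.trans (Quot.out_eq X), rfl, hZ⟩

end TermSubstitution

/-- parallel substitution commutes with abstraction when the bound
variable is fresh for the assignment. -/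
theorem psubst_abs (hinf : Cardinal.aleph0 ≤ Cardinal.mk var)
    (hreg : (Cardinal.mk var).IsRegular)
    (X : Term var varsort index bindex opsym) (hX : good X)
    (ρ : varsort → var → Option (Term var varsort index bindex opsym))
    (hρ : ∀ ys y Y, ρ ys y = some Y → good Y)
    (xs : varsort) (x : var)
    (hnone : ρ xs x = none)
    (hfresh : ∀ ys y Y, ρ ys y = some Y → fresh xs x Y) :
    psubstAbs (Abs xs x X) ρ = Abs xs x (psubst X ρ) := by
  have hx : QFreshAssign xs x (qassign ρ) := qFreshAssign_qassign hnone hfresh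
  by_cases hZ : ∃ Z, PSubstRel X ρ Z
  · have hXZ : PSubstRel X ρ (psubst X ρ) := by
      rw [psubst, dif_pos hZ]
      exact hZ.choose_spec
    have hAbs := hXZ.abs hreg hρ hx hX
    have hB : ∃ B, PSubstAbsRel (Abs xs x X) ρ B := ⟨_, hAbs⟩
    rw [psubstAbs, dif_pos hB]
    exact hB.choose_spec.unique hreg hρ (goodAbs_abs hX) hAbs
  · have hB : ¬∃ B, PSubstAbsRel (Abs xs x X) ρ B := fun ⟨_, hB⟩ =>
      hZ (hB.exists_psubstRel hreg hx hX)
    rw [psubst, dif_neg hZ, psubstAbs, dif_neg hB]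

end Binding
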